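/- arXiv:2511.04891 — 2 statements merged into one kernel-verified Lean document; each statement's English description precedes it below -/
import Mathlib

section
/- Suppose the item set M is partitioned into pairwise disjoint meta-goods M_1,…,M_ℓ and a set Z of objective chores with |Z| ≥ n, where each M_r is chore-maximal and the supporter sets T_r = {i ∈ N : u_i(M_r) ≥ 0} are pairwise disjoint. Then there exists an allocation of M that is both EF1 and envy-freeable. -/
/-- weight of a path -/
def pathW {α : Type} (w : α → α → ℝ) : List α → ℝ
  | [] => 0
  | [_] => 0
  | x :: y :: l => w x y + pathW w (y :: l)

lemma pathW_append {α : Type} (w : α → α → ℝ) (i : α) (L2 : List α) :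
    ∀ (l : List α) (x : α), pathW w ((x :: l) ++ i :: L2)
      = pathW w (x :: l) + w ((x :: l).getLast (by simp)) i + pathW w (i :: L2)
  | [], x => by simp [pathW]
  | y :: l, x => by
    have h := pathW_append w i L2 l y
    simp only [List.cons_append] at h
    simp only [List.cons_append, pathW, h]
    have hlast : (x :: y :: l).getLast (by simp) = (y :: l).getLast (by simp) :=
      List.getLast_cons (by simp)
    rw [hlast]
    ring

lemma exists_perm_of_path {α : Type} [Fintype α] [DecidableEq α] (w : α → α → ℝ)
    (hw : ∀ x, w x x = 0) :
    ∀ (l : List α) (x : α), (x :: l).Nodup → ∃ σ : Equiv.Perm α,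
      (∀ y, y ∉ x :: l → σ y = y) ∧ σ ((x :: l).getLast (by simp)) = x ∧
      ∑ m, w m (σ m) = pathW w (x :: l) + w ((x :: l).getLast (by simp)) x
  | [], x, _ => ⟨1, by simp, by simp, by simp [pathW, hw]⟩
  | y :: l, x, hnd => by
    have hnd' : (y :: l).Nodup := (List.nodup_cons.mp hnd).2
    have hx : x ∉ y :: l := (List.nodup_cons.mp hnd).1
    obtain ⟨σ, h1, h2, h3⟩ := exists_perm_of_path w hw l y hnd'
    have hlast : (x :: y :: l).getLast (by simp) = (y :: l).getLast (by simp) :=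
      List.getLast_cons (by simp)
    have hmem : (y :: l).getLast (by simp) ∈ y :: l := List.getLast_mem _
    rw [hlast]
    set e := (y :: l).getLast (by simp) with he
    have hxe : x ≠ e := fun h => hx (h ▸ hmem)
    refine ⟨Equiv.swap x y * σ, ?_, ?_, ?_⟩
    · intro z hz
      have hz1 : z ≠ x := fun h => hz (by simp [h])
      have hz2 : z ∉ y :: l := fun h => hz (List.mem_cons_of_mem _ h)
      have hz3 : z ≠ y := fun h => hz2 (by simp [h])
      rw [Equiv.Perm.mul_apply, h1 z hz2, Equiv.swap_apply_of_ne_of_ne hz1 hz3]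
    · rw [Equiv.Perm.mul_apply, h2, Equiv.swap_apply_right]
    · have hσx : σ x = x := h1 x hx
      have key : ∀ m, w m ((Equiv.swap x y * σ) m) = w m (σ m)
          + (if m = x then w x y else 0) + (if m = e then w e x - w e y else 0) := by
        intro m
        rw [Equiv.Perm.mul_apply]
        by_cases hm : m = x
        · subst hm
          simp [hσx, hxe, hw]
        · by_cases hme : m = e
          · rw [hme, h2, Equiv.swap_apply_right]
            simp [Ne.symm hxe]
          · have a1 : σ m ≠ x := fun h => hm (σ.injective (h.trans hσx.symm))
            have a2 : σ m ≠ y := fun h => hme (σ.injective (h.trans h2.symm))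
            rw [Equiv.swap_apply_of_ne_of_ne a1 a2]
            simp [hm, hme]
      rw [Finset.sum_congr rfl (fun m _ => key m), Finset.sum_add_distrib,
        Finset.sum_add_distrib, h3]
      simp [pathW]
      ring

lemma exists_payments {α : Type} [Fintype α] [DecidableEq α] (W : α → α → ℝ)
    (hopt : ∀ σ : Equiv.Perm α, ∑ i, W i (σ i) ≤ ∑ i, W i i) :
    ∃ p : α → ℝ, (∀ i, 0 ≤ p i) ∧ ∀ i j, W i i + p i ≥ W i j + p j := by
  set w : α → α → ℝ := fun i j => W i j - W i i with hwdef
  have hw : ∀ x, w x x = 0 := by intro x; simp [hwdef]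
  have hσ : ∀ σ : Equiv.Perm α, ∑ m, w m (σ m) ≤ 0 := by
    intro σ
    simp only [hwdef, Finset.sum_sub_distrib]
    linarith [hopt σ]
  have hmax : ∀ i, ∃ l, (i :: l).Nodup ∧
      ∀ l', (i :: l').Nodup → pathW w (i :: l') ≤ pathW w (i :: l) := by
    intro i
    have hfin : {l : List α | (i :: l).Nodup}.Finite := by
      have h0 : {l : List α | l.Nodup}.Finite :=
        Set.finite_coe_iff.mp (by
          change Finite {l : List α // l.Nodup}
          infer_instance)
      exact h0.subset (fun l hl => (List.nodup_cons.mp hl).2)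
    obtain ⟨l, hl, hl'⟩ := Set.exists_max_image _ (fun l => pathW w (i :: l)) hfin
      ⟨[], by simp⟩
    exact ⟨l, hl, hl'⟩
  choose P hP1 hP2 using hmax
  refine ⟨fun i => pathW w (i :: P i), ?_, ?_⟩
  · intro i
    have := hP2 i [] (by simp)
    simpa [pathW] using this
  · intro i j
    suffices h : w i j + pathW w (j :: P j) ≤ pathW w (i :: P i) by
      simp only [hwdef] at h ⊢
      linarith
    by_cases hi : i ∈ j :: P j
    · obtain ⟨L1, L2, hL⟩ := List.append_of_mem hi
      have hnd := hP1 j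
      rw [hL] at hnd
      have hnd2 : (i :: L2).Nodup := (List.nodup_append.mp hnd).2.1
      have hnd1 : (i :: L1).Nodup := by
        rw [List.nodup_cons]
        refine ⟨fun h => ?_, (List.nodup_append.mp hnd).1⟩
        exact (List.nodup_append.mp hnd).2.2 i h i (by simp) rfl
      have h2 := hP2 i L2 hnd2
      rw [hL]
      obtain ⟨σ, -, -, h3⟩ := exists_perm_of_path w hw L1 i hnd1
      have h4 := hσ σ
      rw [h3] at h4
      cases L1 with
      | nil =>
        simp only [List.nil_append, List.cons.injEq] at hL
        rw [hL.1, hw, List.nil_append]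
        linarith
      | cons y L1 =>
        have hy : j = y := by
          simp only [List.cons_append, List.cons.injEq] at hL
          exact hL.1
        subst hy
        rw [pathW_append]
        rw [List.getLast_cons (by simp)] at h4
        simp only [pathW] at h4
        linarith
    · have := hP2 i (j :: P j) (List.nodup_cons.mpr ⟨hi, hP1 j⟩)
      simpa [pathW] using this

lemma sum_update_eq {n : ℕ} {I : Type} (u : Fin n → I → ℝ) (H : Finset (Fin n))
    (a : Fin n → I) (i : Fin n) (hi : i ∈ H) (c : I) :
    ∑ k ∈ H, u k (Function.update a i c k) = ∑ k ∈ H, u k (a k) - u i (a i) + u i c := by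
  rw [← Finset.add_sum_erase H _ hi, ← Finset.add_sum_erase H (fun k => u k (a k)) hi]
  have : ∑ k ∈ H.erase i, u k (Function.update a i c k) = ∑ k ∈ H.erase i, u k (a k) :=
    Finset.sum_congr rfl (fun k hk => by
      rw [Function.update_of_ne (Finset.ne_of_mem_erase hk)])
  rw [this]
  simp
  ring

lemma update_injOn {n : ℕ} {I : Type} (H : Finset (Fin n))
    (a : Fin n → I) (i : Fin n) (c : I) (ha : Set.InjOn a H)
    (hc : ∀ k ∈ H, a k ≠ c) : Set.InjOn (Function.update a i c) H := by
  intro x hx y hy hxy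
  by_cases h1 : x = i <;> by_cases h2 : y = i
  · rw [h1, h2]
  · subst h1
    simp [Function.update_of_ne h2] at hxy
    exact absurd hxy.symm (hc y hy)
  · subst h2
    simp [Function.update_of_ne h1] at hxy
    exact absurd hxy (hc x hx)
  · rw [Function.update_of_ne h1, Function.update_of_ne h2] at hxy
    exact ha hx hy hxy

lemma rounds {n : ℕ} {I : Type} [Fintype I] [DecidableEq I] (u : Fin n → I → ℝ) (q : ℕ) :
    ∀ (B : Fin n → Finset I) (Y : Finset I),
      (∀ i j, i ≠ j → Disjoint (B i) (B j)) → (∀ i, Disjoint (B i) Y) →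
      (∀ x, x ∈ Y ∨ ∃ i, x ∈ B i) → Y.card = (q + 1) * n →
      (∀ i j, ∀ c ∈ Y, (∑ t ∈ B j, u i t) + u i c ≤ ∑ t ∈ B i, u i t) →
      (∀ σ : Equiv.Perm (Fin n), ∑ i, ∑ t ∈ B (σ i), u i t ≤ ∑ i, ∑ t ∈ B i, u i t) →
    ∃ A : Fin n → Finset I,
      (∀ i j, i ≠ j → Disjoint (A i) (A j)) ∧
      (Finset.univ.biUnion A = Finset.univ) ∧
      (∀ i j : Fin n,
        (∑ t ∈ A i, u i t) ≥ (∑ t ∈ A j, u i t) ∨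
          ∃ t ∈ A i ∪ A j,
            (∑ s ∈ (A i).erase t, u i s) ≥ ∑ s ∈ (A j).erase t, u i s) ∧
      (∃ p : Fin n → ℝ, (∀ i, 0 ≤ p i) ∧
        ∀ i j : Fin n, (∑ t ∈ A i, u i t) + p i ≥ (∑ t ∈ A j, u i t) + p j) := by
  induction q with
  | zero => ?_
  | succ q ih => ?_
  all_goals
    intro B Y hd hdY hcov hcard hstar hopt
    have hle : n ≤ Y.card := by rw [hcard]; nlinarith
    obtain ⟨a, ⟨hainj, haY⟩, hamax⟩ := Set.exists_max_image
      {a : Fin n → I | Function.Injective a ∧ ∀ i, a i ∈ Y} (fun a => ∑ i, u i (a i))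
      (Set.toFinite _) (by
        have : Fintype.card (Fin n) ≤ Fintype.card Y := by simpa using hle
        obtain ⟨e⟩ := Function.Embedding.nonempty_of_card_le this
        exact ⟨fun i => (e i : I), fun x y h => e.injective (Subtype.ext h), fun i => (e i).2⟩)
    have haB : ∀ i j, a i ∉ B j := fun i j h => Finset.disjoint_left.mp (hdY j) h (haY i)
    have hsum : ∀ i j, ∑ t ∈ insert (a j) (B j), u i t = u i (a j) + ∑ t ∈ B j, u i t :=
      fun i j => Finset.sum_insert (haB j j)
    have hd' : ∀ i j, i ≠ j → Disjoint (insert (a i) (B i)) (insert (a j) (B j)) := by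
      intro i j hij
      have h1 : a i ≠ a j := fun h => hij (hainj h)
      simp [Finset.disjoint_insert_left, Finset.disjoint_insert_right, haB, hd i j hij, h1.symm]
    have hopt' : ∀ σ : Equiv.Perm (Fin n), ∑ i, ∑ t ∈ insert (a (σ i)) (B (σ i)), u i t
        ≤ ∑ i, ∑ t ∈ insert (a i) (B i), u i t := by
      intro σ
      simp only [hsum, Finset.sum_add_distrib]
      have := hamax (fun i => a (σ i)) ⟨hainj.comp σ.injective, fun i => haY _⟩
      have := hopt σ
      linarith
    have hcardI : (Finset.univ.image a).card = n := by
      rw [Finset.card_image_of_injective _ hainj]; simp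
    have hsub : Finset.univ.image a ⊆ Y := by
      intro x hx
      obtain ⟨i, -, rfl⟩ := Finset.mem_image.mp hx
      exact haY i
  · refine ⟨fun i => insert (a i) (B i), hd', ?_, ?_, ?_⟩
    · have hYe : Finset.univ.image a = Y :=
        Finset.eq_of_subset_of_card_le hsub (by rw [hcardI, hcard]; simp)
      ext x
      simp only [Finset.mem_biUnion, Finset.mem_univ, true_and, iff_true]
      rcases hcov x with hx | ⟨i, hi⟩
      · rw [← hYe] at hx
        obtain ⟨i, -, rfl⟩ := Finset.mem_image.mp hx
        exact ⟨i, by simp⟩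
      · exact ⟨i, by simp [hi]⟩
    · intro i j
      by_cases hij : i = j
      · left; rw [hij]
      · right
        refine ⟨a i, by simp, ?_⟩
        have h1 : a i ∉ insert (a j) (B j) := by
          simp [haB, hainj.eq_iff, hij]
        rw [Finset.erase_insert (haB i i), Finset.erase_eq_of_notMem h1, hsum]
        linarith [hstar i j (a j) (haY j)]
    · exact exists_payments (fun i j => ∑ t ∈ insert (a j) (B j), u i t) hopt'
  · refine ih (fun i => insert (a i) (B i)) (Y \ Finset.univ.image a) hd' ?_ ?_ ?_ ?_ hopt'
    · intro i
      rw [Finset.disjoint_left]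
      intro x hx hx2
      rw [Finset.mem_sdiff] at hx2
      rcases Finset.mem_insert.mp hx with rfl | h
      · exact hx2.2 (by simp)
      · exact Finset.disjoint_left.mp (hdY i) h hx2.1
    · intro x
      rcases hcov x with hx | ⟨i, hi⟩
      · by_cases hxa : x ∈ Finset.univ.image a
        · obtain ⟨i, -, rfl⟩ := Finset.mem_image.mp hxa
          exact Or.inr ⟨i, by simp⟩
        · exact Or.inl (Finset.mem_sdiff.mpr ⟨hx, hxa⟩)
      · exact Or.inr ⟨i, by simp [hi]⟩
    · rw [Finset.card_sdiff_of_subset hsub, hcardI, hcard]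
      have : (q + 1 + 1) * n = (q + 1) * n + n := by ring
      omega
    · intro i j c hc
      rw [Finset.mem_sdiff] at hc
      simp only [hsum]
      have h1 := hstar i j (a j) (haY j)
      have h2 := hamax (Function.update a i c) ⟨by
          have := update_injOn Finset.univ a i c hainj.injOn
            (fun k _ h => hc.2 (by simp [← h]))
          simpa using this, by
          intro k
          by_cases hk : k = i
          · subst hk; simpa using hc.1
          · rw [Function.update_of_ne hk]; exact haY k⟩
      simp only [sum_update_eq u Finset.univ a i (Finset.mem_univ i) c] at h2
      linarith


/-- Case I: If the item set is partitioned into pairwise disjoint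
chore-maximal meta-goods `M_1, …, M_ℓ` with pairwise disjoint supporter sets, together with a
set `Z` of objective chores with `|Z| ≥ n`, then an EF1 and envy-freeable allocation of the
items exists. -/
theorem ef1_envy_freeable_case_many_chores
    (n : ℕ) (hn : 0 < n) (I : Type) [Fintype I] [DecidableEq I]
    (u : Fin n → I → ℝ)
    (ℓ : ℕ) (Ms : Fin ℓ → Finset I) (Z : Finset I)
    -- meta-goods: nonempty, each valued nonnegatively by some agent
    (hMs_ne : ∀ j, (Ms j).Nonempty)
    (hMs_meta : ∀ j, ∃ i : Fin n, 0 ≤ ∑ t ∈ Ms j, u i t)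
    -- the meta-goods together with Z partition the item set
    (hMs_disj : ∀ j k, j ≠ k → Disjoint (Ms j) (Ms k))
    (hMsZ_disj : ∀ j, Disjoint (Ms j) Z)
    (hcover : Finset.univ.biUnion Ms ∪ Z = Finset.univ)
    -- Z consists of objective chores, at least n of them
    (hZ_chores : ∀ c ∈ Z, ∀ i : Fin n, u i c < 0)
    (hZ_card : n ≤ Z.card)
    -- each M_j is chore-maximal
    (hChoreMax : ∀ j, ∀ c : I, (∀ i : Fin n, u i c < 0) → c ∉ Ms j →
      ∀ i : Fin n, (∑ t ∈ insert c (Ms j), u i t) < 0)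
    -- the supporter sets are pairwise disjoint
    (hSupp : ∀ j k, j ≠ k → ∀ i : Fin n,
      0 ≤ (∑ t ∈ Ms j, u i t) → ¬ (0 ≤ ∑ t ∈ Ms k, u i t)) :
    ∃ A : Fin n → Finset I,
      (∀ i j, i ≠ j → Disjoint (A i) (A j)) ∧
      (Finset.univ.biUnion A = Finset.univ) ∧
      -- EF1
      (∀ i j : Fin n,
        (∑ t ∈ A i, u i t) ≥ (∑ t ∈ A j, u i t) ∨
          ∃ t ∈ A i ∪ A j,
            (∑ s ∈ (A i).erase t, u i s) ≥ ∑ s ∈ (A j).erase t, u i s) ∧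
      -- envy-freeable
      (∃ p : Fin n → ℝ, (∀ i, 0 ≤ p i) ∧
        ∀ i j : Fin n, (∑ t ∈ A i, u i t) + p i ≥ (∑ t ∈ A j, u i t) + p j) := by
  classical
  set v : Fin n → Fin ℓ → ℝ := fun i s => ∑ t ∈ Ms s, u i t with hv
  have hcm : ∀ s, ∀ c ∈ Z, ∀ i, v i s + u i c < 0 := by
    intro s c hc i
    have hns : c ∉ Ms s := fun h => Finset.disjoint_left.mp (hMsZ_disj s) h hc
    have := hChoreMax s c (hZ_chores c hc) hns i
    rw [Finset.sum_insert hns] at this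
    simp only [hv]
    linarith
  have hneg : ∀ (P : Finset (Fin ℓ)) (c : I), c ∈ Z → ∀ i, ∑ s ∈ P, v i s + u i c < 0 := by
    intro P c hc i
    by_cases hP : ∃ s ∈ P, 0 ≤ v i s
    · obtain ⟨s, hs, h0⟩ := hP
      rw [← Finset.add_sum_erase P _ hs]
      have h1 : ∑ r ∈ P.erase s, v i r ≤ 0 := Finset.sum_nonpos (fun r hr =>
        (not_le.mp (hSupp s r (Finset.ne_of_mem_erase hr).symm i h0)).le)
      have := hcm s c hc i
      linarith
    · push Not at hP
      have h1 : ∑ r ∈ P, v i r ≤ 0 := Finset.sum_nonpos (fun r hr => (hP r hr).le)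
      have := hZ_chores c hc i
      linarith
  have hG : ∀ (s : Fin ℓ) (H : Finset (Fin n)), ∃ g : ℝ, 0 ≤ g ∧ (∀ i ∈ H, v i s ≤ g) ∧
      (g = 0 ∨ ∃ i ∈ H, v i s = g) := by
    intro s H
    by_cases h : ∃ i ∈ H, 0 ≤ v i s
    · obtain ⟨i, hi, h0⟩ := h
      obtain ⟨k, hk, hk'⟩ := Finset.exists_max_image H (fun i => v i s) ⟨i, hi⟩
      exact ⟨v k s, h0.trans (hk' i hi), hk', Or.inr ⟨k, hk, rfl⟩⟩
    · push Not at h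
      exact ⟨0, le_rfl, fun i hi => (h i hi).le, Or.inl rfl⟩
  choose G hG0 hG1 hG2 using hG
  obtain ⟨q, rem, hrem, hZq⟩ : ∃ q rem, rem < n ∧ Z.card = (q + 1) * n + rem := by
    have h1 := Nat.div_add_mod Z.card n
    have h2 : 1 ≤ Z.card / n := (Nat.one_le_div_iff hn).mpr hZ_card
    refine ⟨Z.card / n - 1, Z.card % n, Nat.mod_lt _ hn, ?_⟩
    rw [Nat.sub_add_cancel h2, mul_comm]
    exact h1.symm
  obtain ⟨⟨H, a⟩, ⟨hHc, hainj, haZ⟩, hmax⟩ := Set.exists_max_image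
    {x : Finset (Fin n) × (Fin n → I) |
      x.1.card = rem ∧ Set.InjOn x.2 x.1 ∧ ∀ i ∈ x.1, x.2 i ∈ Z}
    (fun x => ∑ i ∈ x.1, u i (x.2 i) + ∑ s, G s x.1) (Set.toFinite _) (by
      have : Fintype.card (Fin n) ≤ Fintype.card Z := by simpa using hZ_card
      obtain ⟨e⟩ := Function.Embedding.nonempty_of_card_le this
      obtain ⟨H, -, hH⟩ := Finset.exists_subset_card_eq
        (s := (Finset.univ : Finset (Fin n))) (n := rem) (by simpa using hrem.le)
      exact ⟨(H, fun i => (e i : I)), hH,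
        fun x _ y _ h => e.injective (Subtype.ext h), fun i _ => (e i).2⟩)
  simp only at hHc hainj haZ
  have hmax' : ∀ (H' : Finset (Fin n)) (a' : Fin n → I), H'.card = rem → Set.InjOn a' H' →
      (∀ i ∈ H', a' i ∈ Z) →
      ∑ i ∈ H', u i (a' i) + ∑ s, G s H' ≤ ∑ i ∈ H, u i (a i) + ∑ s, G s H :=
    fun H' a' h1 h2 h3 => hmax (H', a') ⟨h1, h2, h3⟩
  have hh : ∀ s, ∃ k, 0 ≤ v k s ∧ ((k ∈ H ∧ v k s = G s H) ∨
      ((∀ i ∈ H, v i s < 0) ∧ G s H = 0 ∧ ∀ i, v i s ≤ v k s)) := by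
    intro s
    by_cases h : ∃ i ∈ H, 0 ≤ v i s
    · obtain ⟨i, hi, h0⟩ := h
      obtain ⟨k, hk, hk'⟩ := Finset.exists_max_image H (fun i => v i s) ⟨i, hi⟩
      have hk0 : 0 ≤ v k s := h0.trans (hk' i hi)
      refine ⟨k, hk0, Or.inl ⟨hk, le_antisymm (hG1 s H k hk) ?_⟩⟩
      rcases hG2 s H with h | ⟨j, hj, h⟩
      · rw [h]; exact hk0
      · rw [← h]; exact hk' j hj
    · push Not at h
      obtain ⟨i, hi⟩ := hMs_meta s
      obtain ⟨k, -, hk'⟩ := Finset.exists_max_image Finset.univ (fun i => v i s) ⟨i, by simp⟩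
      refine ⟨k, le_trans hi (hk' i (by simp)), Or.inr ⟨h, ?_, fun i => hk' i (by simp)⟩⟩
      rcases hG2 s H with h' | ⟨j, hj, h'⟩
      · exact h'
      · exact absurd (h j hj) (not_lt.mpr (h' ▸ hG0 s H))
  choose h hh0 hh1 using hh
  set C : Fin n → Finset I := fun i => if i ∈ H then {a i} else ∅ with hC
  set D : Fin n → Finset I := fun i => (Finset.univ.filter (fun s => h s = i)).biUnion Ms with hD
  have hCmem : ∀ x i, x ∈ C i ↔ i ∈ H ∧ x = a i := by
    intro x i
    simp only [hC]
    split_ifs with hi <;> simp [hi]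
  have hDmem : ∀ x i, x ∈ D i ↔ ∃ s, h s = i ∧ x ∈ Ms s := by
    intro x i
    simp [hD]
  have hDZ : ∀ x i, x ∈ D i → x ∉ Z := by
    intro x i hx
    obtain ⟨s, -, hs⟩ := (hDmem x i).mp hx
    exact Finset.disjoint_left.mp (hMsZ_disj s) hs
  have hCZ : ∀ x i, x ∈ C i → x ∈ Z := by
    intro x i hx
    obtain ⟨hi, rfl⟩ := (hCmem x i).mp hx
    exact haZ i hi
  have hMuniq : ∀ x s r, x ∈ Ms s → x ∈ Ms r → s = r := by
    intro x s r hs hr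
    by_contra hne
    exact Finset.disjoint_left.mp (hMs_disj s r hne) hs hr
  have hCsum : ∀ i j, ∑ t ∈ C j, u i t = if j ∈ H then u i (a j) else 0 := by
    intro i j
    simp only [hC]
    split_ifs <;> simp
  have hDsum : ∀ i j, ∑ t ∈ D j, u i t = ∑ s ∈ Finset.univ.filter (fun s => h s = j), v i s := by
    intro i j
    simp only [hD, hv]
    exact Finset.sum_biUnion (fun s _ r _ hsr => hMs_disj s r hsr)
  have hBsum : ∀ i j, ∑ t ∈ C j ∪ D j, u i t = (if j ∈ H then u i (a j) else 0)
      + ∑ s ∈ Finset.univ.filter (fun s => h s = j), v i s := by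
    intro i j
    rw [Finset.sum_union, hCsum, hDsum]
    rw [Finset.disjoint_left]
    exact fun x hx hx' => hDZ x j hx' (hCZ x j hx)
  have hHY : H.image a ⊆ Z := by
    intro x hx
    obtain ⟨i, hi, rfl⟩ := Finset.mem_image.mp hx
    exact haZ i hi
  refine rounds u q (fun i => C i ∪ D i) (Z \ H.image a) ?_ ?_ ?_ ?_ ?_ ?_
  · intro i j hij
    rw [Finset.disjoint_left]
    intro x hx hx'
    rcases Finset.mem_union.mp hx with h1 | h1 <;> rcases Finset.mem_union.mp hx' with h2 | h2
    · obtain ⟨hi, e1⟩ := (hCmem x i).mp h1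
      obtain ⟨hj, e2⟩ := (hCmem x j).mp h2
      exact hij (hainj hi hj (e1.symm.trans e2))
    · exact hDZ x j h2 (hCZ x i h1)
    · exact hDZ x i h1 (hCZ x j h2)
    · obtain ⟨s, e1, hs⟩ := (hDmem x i).mp h1
      obtain ⟨r, e2, hr⟩ := (hDmem x j).mp h2
      have := hMuniq x s r hs hr
      subst this
      exact hij (e1.symm.trans e2)
  · intro i
    rw [Finset.disjoint_left]
    intro x hx hx'
    rw [Finset.mem_sdiff] at hx'
    rcases Finset.mem_union.mp hx with h1 | h1
    · obtain ⟨hi, e1⟩ := (hCmem x i).mp h1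
      exact hx'.2 (Finset.mem_image.mpr ⟨i, hi, e1.symm⟩)
    · exact hDZ x i h1 hx'.1
  · intro x
    have hx : x ∈ Finset.univ.biUnion Ms ∪ Z := by rw [hcover]; simp
    rcases Finset.mem_union.mp hx with h1 | h1
    · obtain ⟨s, -, hs⟩ := Finset.mem_biUnion.mp h1
      exact Or.inr ⟨h s, Finset.mem_union_right _ ((hDmem x _).mpr ⟨s, rfl, hs⟩)⟩
    · by_cases hxa : x ∈ H.image a
      · obtain ⟨i, hi, rfl⟩ := Finset.mem_image.mp hxa
        exact Or.inr ⟨i, Finset.mem_union_left _ ((hCmem _ _).mpr ⟨hi, rfl⟩)⟩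
      · exact Or.inl (Finset.mem_sdiff.mpr ⟨h1, hxa⟩)
  · rw [Finset.card_sdiff_of_subset hHY, Finset.card_image_of_injOn hainj, hHc, hZq]
    omega
  · intro i j c hc
    rw [Finset.mem_sdiff] at hc
    have hcneg : u i c < 0 := hZ_chores c hc.1 i
    simp only [hBsum]
    have hown : 0 ≤ ∑ s ∈ Finset.univ.filter (fun s => h s = i), v i s := by
      refine Finset.sum_nonneg (fun s hs => ?_)
      have := hh0 s
      rw [(Finset.mem_filter.mp hs).2] at this
      exact this
    have hP := hneg (Finset.univ.filter (fun s => h s = j)) c hc.1 i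
    have hia : i ∈ H → u i c ≤ u i (a i) := by
      intro hi
      have h2 := hmax' H (Function.update a i c) hHc (update_injOn H a i c hainj
          (fun k hk e => hc.2 (Finset.mem_image.mpr ⟨k, hk, e⟩))) (by
          intro k hk
          by_cases hki : k = i
          · subst hki; simpa using hc.1
          · rw [Function.update_of_ne hki]; exact haZ k hk)
      rw [sum_update_eq u H a i hi c] at h2
      linarith
    by_cases hj : j ∈ H
    · have hPj := hneg (Finset.univ.filter (fun s => h s = j)) (a j) (haZ j hj) i
      by_cases hi : i ∈ H
      · have := hia hi
        rw [if_pos hj, if_pos hi]; linarith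
      · rw [if_pos hj, if_neg hi]; linarith
    · by_cases hi : i ∈ H
      · have hnp : ∑ s ∈ Finset.univ.filter (fun s => h s = j), v i s ≤ 0 := by
          refine Finset.sum_nonpos (fun s hs => ?_)
          have hsj := (Finset.mem_filter.mp hs).2
          rcases hh1 s with ⟨h1, -⟩ | ⟨h1, -⟩
          · exact absurd (hsj ▸ h1) hj
          · exact (h1 i hi).le
        have := hia hi
        rw [if_neg hj, if_pos hi]; linarith
      · rw [if_neg hj, if_neg hi]; linarith
  · intro σ
    have hexp : ∀ τ : Equiv.Perm (Fin n), ∑ i, ∑ t ∈ C (τ i) ∪ D (τ i), u i t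
        = ∑ i ∈ H.map τ.symm.toEmbedding, u i (a (τ i)) + ∑ s, v (τ.symm (h s)) s := by
      intro τ
      simp only [hBsum, Finset.sum_add_distrib]
      congr 1
      · rw [← Finset.sum_filter]
        refine Finset.sum_congr ?_ (fun _ _ => rfl)
        ext i
        simp [Equiv.symm_apply_eq]
      · simp only [Finset.sum_filter]
        rw [Finset.sum_comm]
        refine Finset.sum_congr rfl (fun s _ => ?_)
        rw [Finset.sum_eq_single (τ.symm (h s))]
        · simp
        · intro i _ hi
          rw [if_neg]
          intro e
          exact hi (by rw [e]; simp)
        · simp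
    have h1 := hexp σ
    have h2 := hexp 1
    have hH1 : H.map (1 : Equiv.Perm (Fin n)).symm.toEmbedding = H := by
      ext i; simp
    rw [hH1] at h2
    simp only [Equiv.Perm.coe_one, id_eq] at h2
    have h2' : ∑ s, v ((1 : Equiv.Perm (Fin n)).symm (h s)) s = ∑ s, v (h s) s := rfl
    rw [h2'] at h2
    rw [h1, h2]
    have h3 := hmax' (H.map σ.symm.toEmbedding) (fun i => a (σ i)) (by simpa using hHc)
      (by
        intro x hx y hy e
        simp only [Finset.coe_map, Equiv.coe_toEmbedding, Set.mem_image, Finset.mem_coe] at hx hy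
        obtain ⟨x', hx', rfl⟩ := hx
        obtain ⟨y', hy', rfl⟩ := hy
        simp only [Equiv.apply_symm_apply] at e
        rw [hainj hx' hy' e])
      (by
        intro i hi
        obtain ⟨x', hx', rfl⟩ := Finset.mem_map.mp hi
        simpa using haZ x' hx')
    have h4 : ∑ s, v (σ.symm (h s)) s
        ≤ ∑ s, (G s (H.map σ.symm.toEmbedding) + (v (h s) s - G s H)) := by
      refine Finset.sum_le_sum (fun s _ => ?_)
      rcases hh1 s with ⟨e1, e2⟩ | ⟨-, e2, e3⟩
      · have := hG1 s (H.map σ.symm.toEmbedding) (σ.symm (h s))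
          (Finset.mem_map.mpr ⟨h s, e1, rfl⟩)
        linarith
      · have := hG0 s (H.map σ.symm.toEmbedding)
        have := e3 (σ.symm (h s))
        linarith
    rw [Finset.sum_add_distrib, Finset.sum_sub_distrib] at h4
    linarith
end

section
/- For any number n of agents with additive utilities over a finite set M of indivisible goods (every agent values every item non-negatively) and with utilities over the cake C = [0,1] given by nonnegative integrable density functions, there exists an allocation {(A_i, C_i)}_{i∈N} of the goods and the cake that is EFM. -/
open MeasureTheory

/-- Every measurable set can be halved for `μ` and all densities in `L` simultaneously. -/
def CanHalve (μ : Measure ℝ) (L : List (ℝ → ℝ)) : Prop :=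
  ∀ E : Set ℝ, MeasurableSet E → ∃ S, MeasurableSet S ∧ S ⊆ E ∧ μ.real S = μ.real E / 2 ∧
    ∀ f ∈ L, ∫ x in S, f x ∂μ = (∫ x in E, f x ∂μ) / 2

/-- A nested family with uniform proportions. -/
def HasFamily (μ : Measure ℝ) (L : List (ℝ → ℝ)) : Prop :=
  ∀ E : Set ℝ, MeasurableSet E → ∃ P : ℝ → Set ℝ,
    (∀ s ∈ Set.Icc (0:ℝ) 1, ∀ t ∈ Set.Icc (0:ℝ) 1, s ≤ t → P s ⊆ P t) ∧
    ∀ t ∈ Set.Icc (0:ℝ) 1, MeasurableSet (P t) ∧ P t ⊆ E ∧ μ.real (P t) = t * μ.real E ∧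
    ∀ f ∈ L, ∫ x in P t, f x ∂μ = t * ∫ x in E, f x ∂μ

theorem small_integral (μ : Measure ℝ) (h : ℝ → ℝ) (hh : Integrable h μ)
    {ε : ℝ} (hε : 0 < ε) : ∃ δ > 0, ∀ S : Set ℝ, μ S < ENNReal.ofReal δ → |∫ x in S, h x ∂μ| < ε := by
  have := hh.tendsto_setIntegral_nhds_zero (l := Filter.comap μ (nhds 0)) (s := id)
    (by simpa using Filter.tendsto_comap)
  rw [Metric.tendsto_nhds] at this
  have h2 := this ε hε
  rw [Filter.eventually_comap] at h2
  rw [ENNReal.nhds_zero_basis.eventually_iff] at h2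
  obtain ⟨d, hd, H⟩ := h2
  obtain ⟨r, hr, hr'⟩ := ENNReal.lt_iff_exists_nnreal_btwn.1 hd
  refine ⟨r, by simpa using hr, fun S hS => ?_⟩
  have := H (x := μ S) (by rw [ENNReal.ofReal_coe_nnreal] at hS; simpa using hS.trans hr') S rfl
  simpa [Real.dist_eq] using this

theorem integral_diff_eq (μ : Measure ℝ) [IsFiniteMeasure μ] (h : ℝ → ℝ) (hh : Integrable h μ)
    {S T : Set ℝ} (hS : MeasurableSet S) (hST : S ⊆ T) :
    ∫ x in T \ S, h x ∂μ = ∫ x in T, h x ∂μ - ∫ x in S, h x ∂μ :=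
  setIntegral_sdiff hS hh.integrableOn hST

theorem family_continuous (μ : Measure ℝ) [IsFiniteMeasure μ] (h : ℝ → ℝ) (hh : Integrable h μ)
    (P : ℝ → Set ℝ) (c : ℝ)
    (hP : ∀ s ∈ Set.Icc (0:ℝ) 1, ∀ t ∈ Set.Icc (0:ℝ) 1, s ≤ t → P s ⊆ P t)
    (hm : ∀ t ∈ Set.Icc (0:ℝ) 1, MeasurableSet (P t) ∧ μ.real (P t) = t * c) :
    ContinuousOn (fun t => ∫ x in P t, h x ∂μ) (Set.Icc 0 1) := by
  have hc : 0 ≤ c := by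
    have := (hm 1 (by simp)).2
    have h2 : 0 ≤ μ.real (P 1) := measureReal_nonneg
    linarith
  rw [Metric.continuousOn_iff]
  intro s hs ε hε
  obtain ⟨δ, hδ, H⟩ := small_integral μ h hh hε
  have key : ∀ a ∈ Set.Icc (0:ℝ) 1, ∀ b ∈ Set.Icc (0:ℝ) 1, a ≤ b → b - a < δ / (c + 1) →
      |∫ x in P b, h x ∂μ - ∫ x in P a, h x ∂μ| < ε := by
    intro a ha b hb hab hlt
    rw [← integral_diff_eq μ h hh (hm a ha).1 (hP a ha b hb hab)]
    apply H
    rw [ENNReal.lt_ofReal_iff_toReal_lt (measure_ne_top _ _)]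
    have : μ.real (P b \ P a) = b * c - a * c := by
      rw [measureReal_sdiff (hP a ha b hb hab) (hm a ha).1, (hm a ha).2, (hm b hb).2]
    change μ.real (P b \ P a) < δ
    rw [this]
    rw [lt_div_iff₀ (by linarith)] at hlt
    nlinarith
  refine ⟨δ / (c + 1), by positivity, fun t ht hd => ?_⟩
  rw [Real.dist_eq] at hd ⊢
  rcases le_total s t with hst | hst
  · exact key s hs t ht hst (lt_of_le_of_lt (le_abs_self _) hd)
  · rw [abs_sub_comm] at hd ⊢
    exact key t ht s hs hst (lt_of_le_of_lt (le_abs_self _) hd)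

theorem canHalve_cons (μ : Measure ℝ) [IsFiniteMeasure μ] (L : List (ℝ → ℝ))
    (hL : ∀ f ∈ L, Integrable f μ) (h : ℝ → ℝ) (hh : Integrable h μ)
    (H1 : CanHalve μ L) (H2 : HasFamily μ L) : CanHalve μ (h :: L) := by
  intro E hE
  obtain ⟨S, hS, hSE, hSm, hSf⟩ := H1 E hE
  have hT : MeasurableSet (E \ S) := hE.diff hS
  obtain ⟨P, hPm, hP⟩ := H2 S hS
  obtain ⟨Q, hQm, hQ⟩ := H2 (E \ S) hT
  have cP := family_continuous μ h hh P (μ.real S) hPm (fun t ht => ⟨(hP t ht).1, (hP t ht).2.2.1⟩)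
  have cQ := family_continuous μ h hh Q (μ.real (E \ S)) hQm
    (fun t ht => ⟨(hQ t ht).1, (hQ t ht).2.2.1⟩)
  have form : ∀ g : ℝ → ℝ, Integrable g μ → ∀ t ∈ Set.Icc (0:ℝ) 1, ∫ x in (S \ P t) ∪ Q t, g x ∂μ =
      ∫ x in S, g x ∂μ - ∫ x in P t, g x ∂μ + ∫ x in Q t, g x ∂μ := by
    intro g hg t ht
    rw [setIntegral_union _ (hQ t ht).1 hg.integrableOn hg.integrableOn,
      integral_diff_eq μ g hg (hP t ht).1 (hP t ht).2.1]
    refine Set.disjoint_left.2 fun x hx hx' => ((hQ t ht).2.1 hx').2 hx.1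
  have z01 : (0:ℝ) ∈ Set.Icc (0:ℝ) 1 := by simp
  have o01 : (1:ℝ) ∈ Set.Icc (0:ℝ) 1 := by simp
  have null : ∀ A : Set ℝ, μ.real A = 0 → ∫ x in A, h x ∂μ = 0 := by
    intro A hA
    apply setIntegral_measure_zero
    simpa [measureReal_eq_zero_iff] using hA
  have full : ∀ A B : Set ℝ, MeasurableSet A → A ⊆ B → μ.real A = μ.real B →
      ∫ x in A, h x ∂μ = ∫ x in B, h x ∂μ := by
    intro A B hA hAB hab
    have h1 := null (B \ A) (by rw [measureReal_sdiff hAB hA]; linarith)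
    rw [integral_diff_eq μ h hh hA hAB] at h1
    linarith
  have hTint := integral_diff_eq μ h hh hS hSE
  have ivt : ∃ t ∈ Set.Icc (0:ℝ) 1, ∫ x in S, h x ∂μ - ∫ x in P t, h x ∂μ + ∫ x in Q t, h x ∂μ
      = (∫ x in E, h x ∂μ) / 2 := by
    have c := (continuousOn_const (c := ∫ x in S, h x ∂μ)).sub cP |>.add cQ
    have p0 := null (P 0) (by rw [(hP 0 z01).2.2.1, zero_mul])
    have q0 := null (Q 0) (by rw [(hQ 0 z01).2.2.1, zero_mul])
    have p1 := full (P 1) S (hP 1 o01).1 (hP 1 o01).2.1 (by rw [(hP 1 o01).2.2.1, one_mul])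
    have q1 := full (Q 1) _ (hQ 1 o01).1 (hQ 1 o01).2.1 (by rw [(hQ 1 o01).2.2.1, one_mul])
    have := intermediate_value_uIcc (a := (0:ℝ)) (b := 1) (by rw [Set.uIcc_of_le zero_le_one]; exact c)
    obtain ⟨t, ht, e⟩ := this (show (∫ x in E, h x ∂μ) / 2 ∈ _ by
      simp only [Pi.add_apply, Pi.sub_apply, p0, q0, p1, q1, hTint, Set.mem_uIcc]
      rcases le_total (∫ x in S, h x ∂μ) ((∫ x in E, h x ∂μ) / 2) with h | h
      · left; constructor <;> linarith
      · right; constructor <;> linarith)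
    exact ⟨t, by rwa [Set.uIcc_of_le zero_le_one] at ht, e⟩
  obtain ⟨t, ht, et⟩ := ivt
  have hmT : μ.real (E \ S) = μ.real E / 2 := by
    rw [measureReal_sdiff hSE hS]; linarith
  refine ⟨(S \ P t) ∪ Q t, (hS.diff (hP t ht).1).union (hQ t ht).1, ?_, ?_, ?_⟩
  · rintro x (hx | hx)
    · exact hSE hx.1
    · exact ((hQ t ht).2.1 hx).1
  · rw [measureReal_union _ (hQ t ht).1, measureReal_sdiff (hP t ht).2.1 (hP t ht).1,
      (hP t ht).2.2.1, (hQ t ht).2.2.1, hmT, hSm]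
    · ring
    · refine Set.disjoint_left.2 fun x hx hx' => ((hQ t ht).2.1 hx').2 hx.1
  · intro f hf
    rcases List.mem_cons.1 hf with rfl | hf
    · rw [form _ hh t ht, et]
    · rw [form _ (hL f hf) t ht, (hP t ht).2.2.2 f hf, (hQ t ht).2.2.2 f hf,
        integral_diff_eq μ f (hL f hf) hS hSE, hSf f hf]
      ring

theorem canHalve_nil : CanHalve (volume.restrict (Set.Icc (0:ℝ) 1)) [] := by
  intro E hE
  set μ := volume.restrict (Set.Icc (0:ℝ) 1) with hμ
  have key : ∀ x y : ℝ, x ≤ y → μ.real (E ∩ Set.Iic y) - μ.real (E ∩ Set.Iic x) ≤ y - x ∧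
      μ.real (E ∩ Set.Iic x) ≤ μ.real (E ∩ Set.Iic y) := by
    intro x y hxy
    have hsub : E ∩ Set.Iic x ⊆ E ∩ Set.Iic y :=
      Set.inter_subset_inter_right _ (Set.Iic_subset_Iic.2 hxy)
    refine ⟨?_, measureReal_mono hsub⟩
    rw [← measureReal_sdiff hsub (hE.inter measurableSet_Iic)]
    have h1 : (E ∩ Set.Iic y) \ (E ∩ Set.Iic x) ⊆ Set.Ioc x y := by
      rintro z ⟨⟨h1, h2⟩, h3⟩
      exact ⟨by by_contra hc; exact h3 ⟨h1, not_lt.1 hc⟩, h2⟩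
    have h2 : μ ((E ∩ Set.Iic y) \ (E ∩ Set.Iic x)) ≤ ENNReal.ofReal (y - x) :=
      (measure_mono h1).trans ((Measure.restrict_apply_le _ _).trans_eq Real.volume_Ioc)
    exact ENNReal.toReal_le_of_le_ofReal (by linarith) h2
  have cont : Continuous fun x => μ.real (E ∩ Set.Iic x) := by
    refine (LipschitzWith.of_dist_le_mul (K := 1) fun x y => ?_).continuous
    rw [Real.dist_eq, Real.dist_eq, NNReal.coe_one, one_mul]
    rcases le_total x y with h | h
    · have := key x y h
      rw [abs_sub_comm, abs_sub_comm x y, abs_of_nonneg (by linarith), abs_of_nonneg (by linarith)]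
      exact this.1
    · have := key y x h
      rw [abs_of_nonneg (by linarith), abs_of_nonneg (by linarith)]
      exact this.1
  have h0 : μ.real (E ∩ Set.Iic 0) = 0 := by
    have : μ (Set.Iic (0:ℝ)) = 0 := by
      rw [hμ, Measure.restrict_apply measurableSet_Iic]
      refine measure_mono_null (t := {0}) ?_ (by simp)
      rintro x ⟨h1, h2⟩
      exact le_antisymm h1 h2.1
    rw [measureReal_def, measure_mono_null Set.inter_subset_right this]; rfl
  have h1 : μ.real (E ∩ Set.Iic 1) = μ.real E := by
    rw [measureReal_def, measureReal_def, hμ, Measure.restrict_apply (hE.inter measurableSet_Iic),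
      Measure.restrict_apply hE]
    congr 2
    ext x; simp; tauto
  have hnn : 0 ≤ μ.real E := measureReal_nonneg
  obtain ⟨x, hx, e⟩ := intermediate_value_Icc (zero_le_one' ℝ) cont.continuousOn
    (show μ.real E / 2 ∈ _ by rw [h0, h1]; constructor <;> linarith)
  exact ⟨E ∩ Set.Iic x, hE.inter measurableSet_Iic, Set.inter_subset_left, e, by simp⟩

/-- Sets that are proportional in `E` for `μ` and all densities in `L`. -/
def GoodSets (μ : Measure ℝ) (L : List (ℝ → ℝ)) (E : Set ℝ) : Set (Set ℝ) :=
  {S | MeasurableSet S ∧ S ⊆ E ∧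
    ∀ f ∈ L, (∫ x in S, f x ∂μ) * μ.real E = μ.real S * ∫ x in E, f x ∂μ}

theorem good_of_limit (μ : Measure ℝ) [IsFiniteMeasure μ] (L : List (ℝ → ℝ))
    (hL : ∀ f ∈ L, Integrable f μ) (E Z : Set ℝ) (hZ : MeasurableSet Z) (hZE : Z ⊆ E)
    (H : ∀ ε > 0, ∃ X ∈ GoodSets μ L E, (X ⊆ Z ∨ Z ⊆ X) ∧ |μ.real Z - μ.real X| < ε) :
    Z ∈ GoodSets μ L E := by
  refine ⟨hZ, hZE, fun f hf => ?_⟩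
  choose X hX hc hXε using fun k : ℕ => H (1 / ((k:ℝ) + 1)) (by positivity)
  have t1 : Filter.Tendsto (fun k => μ.real (X k)) Filter.atTop (nhds (μ.real Z)) := by
    rw [tendsto_iff_dist_tendsto_zero]
    refine squeeze_zero (fun _ => dist_nonneg) (fun k => ?_) tendsto_one_div_add_atTop_nhds_zero_nat
    rw [Real.dist_eq, abs_sub_comm]; exact (hXε k).le
  have t2 : Filter.Tendsto (fun k => ∫ x in X k, f x ∂μ) Filter.atTop
      (nhds (∫ x in Z, f x ∂μ)) := by
    rw [Metric.tendsto_nhds]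
    intro ε hε
    obtain ⟨δ, hδ, h⟩ := small_integral μ f (hL f hf) hε
    rw [Metric.tendsto_nhds] at t1
    filter_upwards [t1 δ hδ] with k hk
    rw [Real.dist_eq] at hk ⊢
    rcases hc k with h1 | h1
    · rw [abs_sub_comm, ← integral_diff_eq μ f (hL f hf) (hX k).1 h1]
      apply h
      rw [ENNReal.lt_ofReal_iff_toReal_lt (measure_ne_top _ _)]
      change μ.real _ < δ
      rw [measureReal_sdiff h1 (hX k).1]
      rw [abs_sub_comm] at hk
      exact (le_abs_self _).trans_lt hk
    · rw [← integral_diff_eq μ f (hL f hf) hZ h1]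
      apply h
      rw [ENNReal.lt_ofReal_iff_toReal_lt (measure_ne_top _ _)]
      change μ.real _ < δ
      rw [measureReal_sdiff h1 hZ]
      exact (le_abs_self _).trans_lt hk
  have e1 := t2.mul_const (μ.real E)
  have e2 := t1.mul_const (∫ x in E, f x ∂μ)
  simp_rw [(hX _).2.2 f hf] at e1
  exact tendsto_nhds_unique e1 e2

theorem hasFamily_of_canHalve (μ : Measure ℝ) [IsFiniteMeasure μ] (L : List (ℝ → ℝ))
    (hL : ∀ f ∈ L, Integrable f μ) (H : CanHalve μ L) : HasFamily μ L := by
  intro E hE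
  by_cases hm0 : μ.real E = 0
  · refine ⟨fun _ => E, fun _ _ _ _ _ => le_rfl, fun t _ => ⟨hE, le_rfl, by simp [hm0], ?_⟩⟩
    intro f _
    have : ∫ x in E, f x ∂μ = 0 := by
      apply setIntegral_measure_zero
      simpa [measureReal_eq_zero_iff] using hm0
    rw [this, mul_zero]
  have hmE : 0 < μ.real E := lt_of_le_of_ne measureReal_nonneg (Ne.symm hm0)
  set G := GoodSets μ L E with hG
  set r : Set ℝ → Set ℝ → Prop := fun S T => S ⊆ T ∧ μ.real S < μ.real T with hr
  obtain ⟨c, cG, cch, cmax⟩ : ∃ c : Set (Set ℝ), c ⊆ G ∧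
      (∀ X ∈ c, ∀ Y ∈ c, μ.real X ≤ μ.real Y → X ⊆ Y) ∧
      (∀ Z ∈ G, (∀ X ∈ c, r X Z ∨ r Z X) → Z ∈ c) := by
    obtain ⟨M, hM, -⟩ := (IsChain.empty (r := fun S T : G => r S.1 T.1)).exists_maxChain
    refine ⟨Subtype.val '' M, ?_, ?_, ?_⟩
    · rintro _ ⟨x, _, rfl⟩; exact x.2
    · rintro _ ⟨X, hX, rfl⟩ _ ⟨Y, hY, rfl⟩ h
      by_cases hne : X = Y
      · rw [hne]
      rcases hM.1 hX hY hne with h1 | h1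
      · exact h1.1
      · exact absurd h1.2 (not_lt.2 h)
    · intro Z hZ h
      have h1 : IsChain (fun S T : G => r S.1 T.1) (insert ⟨Z, hZ⟩ M) := by
        apply hM.1.insert
        intro b hb _
        exact (h b.1 ⟨b, hb, rfl⟩).symm
      have h2 := hM.2 h1 (Set.subset_insert _ _)
      refine ⟨⟨Z, hZ⟩, ?_, rfl⟩
      rw [h2]; exact Set.mem_insert _ _
  have mle : ∀ X ∈ G, μ.real X ≤ μ.real E := fun X hX => measureReal_mono hX.2.1
  have empG : ∅ ∈ G := ⟨MeasurableSet.empty, Set.empty_subset _, by simp⟩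
  have EG : E ∈ G := ⟨hE, le_rfl, fun f _ => mul_comm _ _⟩
  have zero_mem : ∃ X ∈ c, μ.real X = 0 := by
    by_contra hc
    push Not at hc
    refine hc ∅ (cmax ∅ empG fun X hX => Or.inr ⟨Set.empty_subset _, ?_⟩) (by simp)
    rw [measureReal_empty]
    exact lt_of_le_of_ne measureReal_nonneg (Ne.symm (hc X hX))
  have top_mem : ∃ X ∈ c, μ.real X = μ.real E := by
    by_contra hc
    push Not at hc
    refine hc E (cmax E EG fun X hX => Or.inl ⟨(cG hX).2.1, ?_⟩) rfl
    exact lt_of_le_of_ne (mle X (cG hX)) (hc X hX)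
  have main : ∀ τ, 0 ≤ τ → τ ≤ μ.real E → ∃ X ∈ c, μ.real X = τ := by
    intro τ hτ0 hτ1
    -- the lower end
    have lower : ∃ X ∈ c, μ.real X ≤ τ ∧ ∀ Y ∈ c, μ.real Y ≤ τ → μ.real Y ≤ μ.real X := by
      by_contra hc
      push Not at hc
      set V := {v | ∃ X ∈ c, μ.real X = v ∧ v ≤ τ} with hV
      have Vne : V.Nonempty := by
        obtain ⟨X, hX, e⟩ := zero_mem
        exact ⟨0, X, hX, e, hτ0⟩
      have Vbd : BddAbove V := ⟨τ, fun v hv => by obtain ⟨X, _, _, h⟩ := hv; exact h⟩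
      set a := sSup V with ha
      have haτ : a ≤ τ := csSup_le Vne (fun v hv => by obtain ⟨X, _, _, h⟩ := hv; exact h)
      have hlt : ∀ X ∈ c, μ.real X ≤ τ → μ.real X < a := by
        intro X hX hXτ
        obtain ⟨Y, hY, hYτ, hXY⟩ := hc X hX hXτ
        exact hXY.trans_le (le_csSup Vbd ⟨Y, hY, rfl, hYτ⟩)
      have hex : ∀ k : ℕ, ∃ X ∈ c, μ.real X ≤ τ ∧ a - 1 / ((k:ℝ) + 1) < μ.real X := by
        intro k
        obtain ⟨v, ⟨X, hX, rfl, h1⟩, h2⟩ := exists_lt_of_lt_csSup Vne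
          (show a - 1 / ((k:ℝ) + 1) < sSup V by
            have : (0:ℝ) < 1 / ((k:ℝ) + 1) := by positivity
            linarith)
        exact ⟨X, hX, h1, h2⟩
      choose X hX hXτ hXa using hex
      have above : ∀ v < a, ∃ k, v < μ.real (X k) := by
        intro v hv
        obtain ⟨k, hk⟩ := exists_nat_one_div_lt (sub_pos.2 hv)
        exact ⟨k, by have := hXa k; linarith⟩
      have dir : Directed (· ⊆ ·) X := by
        intro i j
        obtain ⟨k, hk⟩ := above (max (μ.real (X i)) (μ.real (X j)))
          (max_lt (hlt _ (hX i) (hXτ i)) (hlt _ (hX j) (hXτ j)))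
        exact ⟨k, cch _ (hX i) _ (hX k) ((le_max_left _ _).trans_lt hk).le,
          cch _ (hX j) _ (hX k) ((le_max_right _ _).trans_lt hk).le⟩
      have hZm : MeasurableSet (⋃ k, X k) := MeasurableSet.iUnion fun k => (cG (hX k)).1
      have hZE : (⋃ k, X k) ⊆ E := Set.iUnion_subset fun k => (cG (hX k)).2.1
      have hsub : ∀ k, X k ⊆ ⋃ k, X k := Set.subset_iUnion X
      have hZa : μ.real (⋃ k, X k) = a := by
        apply le_antisymm
        · have ha0 : 0 ≤ a := measureReal_nonneg.trans (hlt _ (hX 0) (hXτ 0)).le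
          refine ENNReal.toReal_le_of_le_ofReal ha0 ?_
          rw [dir.measure_iUnion]
          refine iSup_le fun k => ?_
          rw [ENNReal.le_ofReal_iff_toReal_le (measure_ne_top _ _) ha0]
          exact (hlt _ (hX k) (hXτ k)).le
        · by_contra hcon
          obtain ⟨k, hk⟩ := above _ (not_le.1 hcon)
          exact absurd (measureReal_mono (μ := μ) (hsub k)) (not_le.2 hk)
      have hZG : (⋃ k, X k) ∈ G := by
        refine good_of_limit μ L hL E _ hZm hZE fun ε hε => ?_
        obtain ⟨k, hk⟩ := above (a - ε) (by linarith)
        refine ⟨X k, cG (hX k), Or.inl (hsub k), ?_⟩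
        rw [hZa, abs_of_nonneg (by linarith [hlt _ (hX k) (hXτ k)])]
        linarith
      have hZc := cmax _ hZG fun Y hY => by
        rcases lt_or_ge τ (μ.real Y) with h | h
        · right
          refine ⟨Set.iUnion_subset fun k => cch _ (hX k) _ hY ((hXτ k).trans_lt h).le, ?_⟩
          rw [hZa]; exact haτ.trans_lt h
        · left
          have h1 := hlt Y hY h
          obtain ⟨k, hk⟩ := above _ h1
          exact ⟨(cch _ hY _ (hX k) hk.le).trans (hsub k), by rw [hZa]; exact h1⟩
      exact absurd (hlt _ hZc (hZa.trans_le haτ)) (by rw [hZa]; exact lt_irrefl _)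
    have upper : ∃ X ∈ c, τ ≤ μ.real X ∧ ∀ Y ∈ c, τ ≤ μ.real Y → μ.real X ≤ μ.real Y := by
      by_contra hc
      push Not at hc
      set V := {v | ∃ X ∈ c, μ.real X = v ∧ τ ≤ v} with hV
      have Vne : V.Nonempty := by
        obtain ⟨X, hX, e⟩ := top_mem
        exact ⟨_, X, hX, e, hτ1⟩
      have Vbd : BddBelow V := ⟨τ, fun v hv => by obtain ⟨X, _, _, h⟩ := hv; exact h⟩
      set a := sInf V with ha
      have haτ : τ ≤ a := le_csInf Vne (fun v hv => by obtain ⟨X, _, _, h⟩ := hv; exact h)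
      have hlt : ∀ X ∈ c, τ ≤ μ.real X → a < μ.real X := by
        intro X hX hXτ
        obtain ⟨Y, hY, hYτ, hXY⟩ := hc X hX hXτ
        exact (csInf_le Vbd ⟨Y, hY, rfl, hYτ⟩).trans_lt hXY
      have hex : ∀ k : ℕ, ∃ X ∈ c, τ ≤ μ.real X ∧ μ.real X < a + 1 / ((k:ℝ) + 1) := by
        intro k
        obtain ⟨v, ⟨X, hX, rfl, h1⟩, h2⟩ := exists_lt_of_csInf_lt Vne
          (show sInf V < a + 1 / ((k:ℝ) + 1) by
            have : (0:ℝ) < 1 / ((k:ℝ) + 1) := by positivity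
            linarith)
        exact ⟨X, hX, h1, h2⟩
      choose X hX hXτ hXa using hex
      have above : ∀ v, a < v → ∃ k, μ.real (X k) < v := by
        intro v hv
        obtain ⟨k, hk⟩ := exists_nat_one_div_lt (sub_pos.2 hv)
        exact ⟨k, by have := hXa k; linarith⟩
      have dir : Directed (· ⊇ ·) X := by
        intro i j
        obtain ⟨k, hk⟩ := above (min (μ.real (X i)) (μ.real (X j)))
          (lt_min (hlt _ (hX i) (hXτ i)) (hlt _ (hX j) (hXτ j)))
        exact ⟨k, cch _ (hX k) _ (hX i) (hk.trans_le (min_le_left _ _)).le,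
          cch _ (hX k) _ (hX j) (hk.trans_le (min_le_right _ _)).le⟩
      have hZm : MeasurableSet (⋂ k, X k) := MeasurableSet.iInter fun k => (cG (hX k)).1
      have hsub : ∀ k, (⋂ k, X k) ⊆ X k := Set.iInter_subset X
      have hZE : (⋂ k, X k) ⊆ E := (hsub 0).trans (cG (hX 0)).2.1
      have hZa : μ.real (⋂ k, X k) = a := by
        apply le_antisymm
        · by_contra hcon
          obtain ⟨k, hk⟩ := above _ (not_le.1 hcon)
          exact absurd (measureReal_mono (μ := μ) (hsub k)) (not_le.2 hk)
        · rw [measureReal_def, ← ENNReal.ofReal_le_iff_le_toReal (measure_ne_top _ _),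
            dir.measure_iInter (fun k => (cG (hX k)).1.nullMeasurableSet)
              ⟨0, measure_ne_top _ _⟩]
          refine le_iInf fun k => ?_
          rw [ENNReal.ofReal_le_iff_le_toReal (measure_ne_top _ _)]
          exact (hlt _ (hX k) (hXτ k)).le
      have hZG : (⋂ k, X k) ∈ G := by
        refine good_of_limit μ L hL E _ hZm hZE fun ε hε => ?_
        obtain ⟨k, hk⟩ := above (a + ε) (by linarith)
        refine ⟨X k, cG (hX k), Or.inr (hsub k), ?_⟩
        rw [hZa, abs_sub_comm, abs_of_nonneg (by linarith [hlt _ (hX k) (hXτ k)])]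
        linarith
      have hZc := cmax _ hZG fun Y hY => by
        rcases lt_or_ge (μ.real Y) τ with h | h
        · left
          refine ⟨Set.subset_iInter fun k => cch _ hY _ (hX k) (h.trans_le (hXτ k)).le, ?_⟩
          rw [hZa]; exact h.trans_le haτ
        · right
          have h1 := hlt Y hY h
          obtain ⟨k, hk⟩ := above _ h1
          exact ⟨(hsub k).trans (cch _ (hX k) _ hY hk.le), by rw [hZa]; exact h1⟩
      exact absurd (hlt _ hZc (haτ.trans_eq hZa.symm)) (by rw [hZa]; exact lt_irrefl _)
    obtain ⟨A, hA, hAτ, hAmax⟩ := lower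
    obtain ⟨B, hB, hBτ, hBmin⟩ := upper
    by_contra hcon
    push Not at hcon
    have hAτ' : μ.real A < τ := lt_of_le_of_ne hAτ (hcon A hA)
    have hBτ' : τ < μ.real B := lt_of_le_of_ne hBτ (Ne.symm (hcon B hB))
    have hAB : A ⊆ B := cch A hA B hB (hAτ'.trans hBτ').le
    have hAm := (cG hA).1
    have hBm := (cG hB).1
    obtain ⟨S, hS, hSD, hSm, hSf⟩ := H (B \ A) (hBm.diff hAm)
    have hdis : Disjoint A S := Set.disjoint_left.2 fun x hx hx' => (hSD hx').2 hx
    have hXB : A ∪ S ⊆ B := Set.union_subset hAB (hSD.trans Set.sdiff_subset)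
    have hXm : μ.real (A ∪ S) = (μ.real A + μ.real B) / 2 := by
      rw [measureReal_union hdis hS, hSm, measureReal_sdiff hAB hAm]; ring
    have hXG : A ∪ S ∈ G := by
      refine ⟨hAm.union hS, hXB.trans (cG hB).2.1, fun f hf => ?_⟩
      rw [setIntegral_union hdis hS (hL f hf).integrableOn (hL f hf).integrableOn, hSf f hf,
        integral_diff_eq μ f (hL f hf) hAm hAB, hXm]
      have e1 := (cG hA).2.2 f hf
      have e2 := (cG hB).2.2 f hf
      linarith
    have hXc := cmax _ hXG fun Y hY => by
      rcases lt_or_ge (μ.real Y) τ with h | h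
      · left
        have h1 := hAmax Y hY h.le
        have h2 : μ.real Y < μ.real (A ∪ S) := by rw [hXm]; linarith
        exact ⟨(cch Y hY A hA h1).trans Set.subset_union_left, h2⟩
      · right
        have h1 := hBmin Y hY h
        exact ⟨hXB.trans (cch B hB Y hY h1), by rw [hXm]; linarith⟩
    rcases lt_or_ge (μ.real (A ∪ S)) τ with h | h
    · have := hAmax _ hXc h.le
      rw [hXm] at this; linarith
    · have := hBmin _ hXc h
      rw [hXm] at this; linarith
  choose! P hP using fun t (ht : t ∈ Set.Icc (0:ℝ) 1) => main (t * μ.real E)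
    (mul_nonneg ht.1 hmE.le) (mul_le_of_le_one_left hmE.le ht.2)
  refine ⟨P, fun s hs t ht hst => ?_, fun t ht => ?_⟩
  · rcases hst.eq_or_lt with rfl | hst
    · exact le_rfl
    · refine cch _ (hP s hs).1 _ (hP t ht).1 ?_
      rw [(hP s hs).2, (hP t ht).2]
      exact (mul_lt_mul_of_pos_right hst hmE).le
  · obtain ⟨h1, h2⟩ := hP t ht
    refine ⟨(cG h1).1, (cG h1).2.1, h2, fun f hf => ?_⟩
    have := (cG h1).2.2 f hf
    rw [h2] at this
    have h3 : ((∫ x in P t, f x ∂μ) - t * ∫ x in E, f x ∂μ) * μ.real E = 0 := by linarith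
    rcases mul_eq_zero.1 h3 with h | h
    · linarith
    · exact absurd h hm0

theorem canHalve_all (L : List (ℝ → ℝ))
    (hL : ∀ f ∈ L, Integrable f (volume.restrict (Set.Icc (0:ℝ) 1))) :
    CanHalve (volume.restrict (Set.Icc (0:ℝ) 1)) L := by
  induction L with
  | nil => exact canHalve_nil
  | cons h L ih =>
    have hL' : ∀ f ∈ L, Integrable f (volume.restrict (Set.Icc (0:ℝ) 1)) :=
      fun f hf => hL f (List.mem_cons_of_mem _ hf)
    exact canHalve_cons _ L hL' h (hL h List.mem_cons_self) (ih hL')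
      (hasFamily_of_canHalve _ L hL' (ih hL'))

theorem cake_partition (n : ℕ) (f : Fin n → ℝ → ℝ)
    (hf : ∀ i, IntegrableOn (f i) (Set.Icc (0 : ℝ) 1))
    (p : Fin n → ℝ) (hp : ∀ i, 0 ≤ p i) (hp1 : ∑ i, p i = 1) :
    ∃ C : Fin n → Set ℝ, (∀ i, MeasurableSet (C i)) ∧
      (∀ i j, i ≠ j → Disjoint (C i) (C j)) ∧ ((⋃ i, C i) = Set.Icc (0 : ℝ) 1) ∧
      ∀ i j, ∫ x in C j, f i x = p j * ∫ x in Set.Icc (0:ℝ) 1, f i x := by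
  set μ := volume.restrict (Set.Icc (0:ℝ) 1) with hμ
  have hL : ∀ g ∈ List.ofFn f, Integrable g μ := by
    intro g hg
    obtain ⟨i, rfl⟩ := (List.mem_ofFn' _ _).1 hg
    exact hf i
  obtain ⟨P, hPm, hP⟩ := hasFamily_of_canHalve μ _ hL (canHalve_all _ hL)
    (Set.Icc (0:ℝ) 1) measurableSet_Icc
  set T : ℝ → Set ℝ := fun t => if 1 ≤ t then Set.Icc (0:ℝ) 1 else if t ≤ 0 then ∅ else P t with hT
  have T1 : ∀ t, 1 ≤ t → T t = Set.Icc (0:ℝ) 1 := fun t ht => if_pos ht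
  have T0 : ∀ t, t ≤ 0 → T t = ∅ := fun t ht => by
    simp only [hT]; rw [if_neg (by linarith), if_pos ht]
  have TP : ∀ t, 0 < t → t < 1 → T t = P t := fun t h0 h1 => by
    simp only [hT]; rw [if_neg (by linarith), if_neg (by linarith)]
  have Tm : ∀ t, MeasurableSet (T t) := by
    intro t
    rcases le_or_gt 1 t with h | h
    · rw [T1 t h]; exact measurableSet_Icc
    rcases le_or_gt t 0 with h' | h'
    · rw [T0 t h']; exact MeasurableSet.empty
    · rw [TP t h' h]; exact (hP t ⟨h'.le, h.le⟩).1
  have Tsub : ∀ t, T t ⊆ Set.Icc (0:ℝ) 1 := by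
    intro t
    rcases le_or_gt 1 t with h | h
    · rw [T1 t h]
    rcases le_or_gt t 0 with h' | h'
    · rw [T0 t h']; exact Set.empty_subset _
    · rw [TP t h' h]; exact (hP t ⟨h'.le, h.le⟩).2.1
  have Tmono : ∀ s t, s ≤ t → T s ⊆ T t := by
    intro s t hst
    rcases le_or_gt 1 t with h | h
    · rw [T1 t h]; exact Tsub s
    rcases le_or_gt s 0 with h' | h'
    · rw [T0 s h']; exact Set.empty_subset _
    · rw [TP s h' (by linarith), TP t (by linarith) h]
      exact hPm s ⟨h'.le, by linarith⟩ t ⟨by linarith, h.le⟩ hst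
  have Tint : ∀ t ∈ Set.Icc (0:ℝ) 1, ∀ i, ∫ x in T t, f i x = t * ∫ x in Set.Icc (0:ℝ) 1, f i x := by
    intro t ht i
    rcases le_or_gt 1 t with h | h
    · rw [T1 t h, le_antisymm ht.2 h, one_mul]
    rcases le_or_gt t 0 with h' | h'
    · rw [T0 t h', le_antisymm h' ht.1]; simp
    · have h1 := hP t ht
      have h2 := h1.2.2.2 (f i) ((List.mem_ofFn' _ _).2 ⟨i, rfl⟩)
      rw [hμ, Measure.restrict_restrict h1.1, Measure.restrict_restrict measurableSet_Icc,
        Set.inter_self, Set.inter_eq_left.2 h1.2.1] at h2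
      rw [TP t h' h]; exact h2
  set q : ℕ → ℝ := fun k => ∑ j : Fin n, if j.1 < k then p j else 0 with hq
  have qmono : ∀ a b, a ≤ b → q a ≤ q b := by
    intro a b hab
    refine Finset.sum_le_sum fun j _ => ?_
    split_ifs with h1 h2 h2
    · exact le_rfl
    · omega
    · exact hp j
    · exact le_rfl
  have q0 : q 0 = 0 := by simp [hq]
  have qn : q n = 1 := by simp [hq, hp1]
  have qs : ∀ j : Fin n, q (j.1 + 1) = q j.1 + p j := by
    intro j
    have : p j = ∑ k : Fin n, if k = j then p k else 0 := by simp
    rw [this, ← Finset.sum_add_distrib]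
    refine Finset.sum_congr rfl fun k _ => ?_
    rcases lt_trichotomy k.1 j.1 with h | h | h
    · have : k ≠ j := fun e => by rw [e] at h; omega
      simp [h, this, Nat.lt_succ_of_lt h]
    · have : k = j := Fin.ext h
      simp [this]
    · have : k ≠ j := fun e => by rw [e] at h; omega
      rw [if_neg (by omega), if_neg (by omega), if_neg this, add_zero]
  have qI : ∀ k, k ≤ n → q k ∈ Set.Icc (0:ℝ) 1 := fun k hk =>
    ⟨q0 ▸ qmono 0 k (Nat.zero_le _), qn ▸ qmono k n hk⟩
  have dis : ∀ i j : Fin n, i.1 < j.1 →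
      Disjoint (T (q (i.1 + 1)) \ T (q i.1)) (T (q (j.1 + 1)) \ T (q j.1)) := by
    intro i j hij
    exact Set.disjoint_left.2 fun x hx hx' => hx'.2 (Tmono _ _ (qmono _ _ hij) hx.1)
  refine ⟨fun j => T (q (j.1 + 1)) \ T (q j.1), fun j => (Tm _).diff (Tm _), ?_, ?_, ?_⟩
  · intro i j hij
    rcases lt_or_gt_of_ne (fun h => hij (Fin.ext h)) with h | h
    · exact dis i j h
    · exact (dis j i h).symm
  · apply Set.Subset.antisymm
    · exact Set.iUnion_subset fun j => Set.sdiff_subset.trans (Tsub _)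
    · intro x hx
      classical
      have hex : ∃ k, x ∈ T (q k) := ⟨n, by rw [qn, T1 1 le_rfl]; exact hx⟩
      have h1 := Nat.find_spec hex
      have h2 : Nat.find hex ≤ n := Nat.find_min' hex (by rw [qn, T1 1 le_rfl]; exact hx)
      have h3 : Nat.find hex ≠ 0 := by
        intro h; rw [h, q0, T0 0 le_rfl] at h1; exact h1
      obtain ⟨k, hk⟩ := Nat.exists_eq_succ_of_ne_zero h3
      have h4 := Nat.find_min hex (m := k) (by omega)
      rw [hk] at h1
      exact Set.mem_iUnion.2 ⟨⟨k, by omega⟩, h1, h4⟩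
  · intro i j
    have hsub := Tmono _ _ (qmono j.1 (j.1 + 1) (Nat.le_succ _))
    rw [setIntegral_sdiff (Tm _) ((hf i).mono_set (Tsub _)) hsub, Tint _ (qI _ (by omega)),
      Tint _ (qI _ (by omega)), qs]
    ring

/-- Weight of the walk `i, l₀, l₁, …`. -/
def walkWeight {ι : Type*} (w : ι → ι → ℝ) : ι → List ι → ℝ
  | _, [] => 0
  | i, j :: l => w i j + walkWeight w j l

theorem walkWeight_append {ι : Type*} (w : ι → ι → ℝ) (i k : ι) (l₁ l₂ : List ι) :
    walkWeight w i (l₁ ++ k :: l₂) = walkWeight w i (l₁ ++ [k]) + walkWeight w k l₂ := by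
  induction l₁ generalizing i with
  | nil => simp [walkWeight]
  | cons a l ih => simp only [List.cons_append, walkWeight, ih a]; ring

theorem walkWeight_concat {ι : Type*} (w : ι → ι → ℝ) (i k : ι) (l : List ι) :
    walkWeight w i (l ++ [k]) = (List.zipWith w (i :: l) (l ++ [k])).sum := by
  induction l generalizing i with
  | nil => simp [walkWeight]
  | cons a l ih => simp only [List.cons_append, walkWeight, ih a, List.zipWith_cons_cons, List.sum_cons]

theorem cycle_le {ι : Type*} [Fintype ι] [DecidableEq ι] (w : ι → ι → ℝ) (h0 : ∀ i, w i i = 0)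
    (hw : ∀ σ : Equiv.Perm ι, ∑ i, w i (σ i) ≤ 0) (i : ι) (l : List ι) (hl : (i :: l).Nodup) :
    walkWeight w i (l ++ [i]) ≤ 0 := by
  refine le_trans (le_of_eq ?_) (hw (i :: l).formPerm)
  have h1 : ∑ x, w x ((i :: l).formPerm x) = ∑ x ∈ (i :: l).toFinset, w x ((i :: l).formPerm x) := by
    symm
    apply Finset.sum_subset (Finset.subset_univ _)
    intro x _ hx
    rw [List.formPerm_apply_of_notMem (by simpa using hx), h0]
  rw [h1, List.sum_toFinset _ hl, walkWeight_concat]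
  congr 1
  apply List.ext_getElem
  · simp
  · intro k hk hk'
    rw [List.getElem_zipWith, List.getElem_map, List.formPerm_apply_getElem _ hl]
    have := List.getElem_rotate (i :: l) 1 k (by simpa using hk')
    rw [← this]
    simp

theorem exists_potential {ι : Type*} [Fintype ι] [DecidableEq ι] (w : ι → ι → ℝ)
    (h0 : ∀ i, w i i = 0)
    (hw : ∀ σ : Equiv.Perm ι, ∑ i, w i (σ i) ≤ 0) :
    ∃ q : ι → ℝ, ∀ i j, w i j + q j ≤ q i := by
  have hfin : {l : List ι | l.Nodup}.Finite := @Set.toFinite _ _ (inferInstanceAs (Finite {l : List ι // l.Nodup}))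
  have hmax : ∀ i, ∃ l ∈ {l : List ι | (i :: l).Nodup}, ∀ l' ∈ {l : List ι | (i :: l).Nodup},
      walkWeight w i l' ≤ walkWeight w i l := fun i =>
    Set.exists_max_image _ _ (hfin.subset fun l hl => (List.nodup_cons.1 hl).2) ⟨[], by simp⟩
  choose m hm hmm using hmax
  refine ⟨fun i => walkWeight w i (m i), fun i j => ?_⟩
  by_cases hij : i = j
  · subst hij; simp [h0]
  by_cases hi : i ∈ m j
  · obtain ⟨l₁, l₂, e⟩ := List.append_of_mem hi
    have hnd : (j :: m j).Nodup := hm j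
    rw [e] at hnd
    have hnd2 : ((j :: l₁) ++ (i :: l₂)).Nodup := by simpa using hnd
    obtain ⟨n1, n2, n3⟩ := List.nodup_append.1 hnd2
    have hc := cycle_le w h0 hw i (j :: l₁) (List.nodup_cons.2
      ⟨fun h => n3 i h i (by simp) rfl, n1⟩)
    have h2 := hmm i l₂ n2
    simp only [e]
    rw [walkWeight_append]
    simp only [List.cons_append, walkWeight] at hc
    linarith
  · have : walkWeight w i (j :: m j) ≤ _ := hmm i (j :: m j)
      (List.nodup_cons.2 ⟨by simp [hij, hi], hm j⟩)
    simpa [walkWeight] using this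

/-- Maximal-welfare matching in rounds: an EF1 and envy-freeable allocation of items `R`. -/
theorem exists_ef1_freeable (n : ℕ) (hn : 0 < n) (I : Type) [Fintype I] [DecidableEq I]
    (v : Fin n → I → ℝ) (hv : ∀ i t, 0 ≤ v i t) : ∀ (m : ℕ) (R : Finset I), R.card = m →
    ∃ A : Fin n → Finset I, (∀ i j, i ≠ j → Disjoint (A i) (A j)) ∧ Finset.univ.biUnion A = R ∧
      (∀ σ : Equiv.Perm (Fin n), ∑ i, ∑ t ∈ A (σ i), v i t ≤ ∑ i, ∑ t ∈ A i, v i t) ∧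
      ∀ i j, A j = ∅ ∨ ∃ t ∈ A j, ∑ s ∈ (A j).erase t, v i s ≤ ∑ s ∈ A i, v i s := by
  intro m
  induction m using Nat.strong_induction_on with
  | _ m ih =>
  intro R hR
  by_cases hc : R.card ≤ n
  · set Q : Set (Fin n → Finset I) := {A | (∀ i j, i ≠ j → Disjoint (A i) (A j)) ∧
      Finset.univ.biUnion A = R ∧ ∀ i, (A i).card ≤ 1} with hQ
    have hne : Q.Nonempty := by
      obtain ⟨e⟩ : Nonempty (R ↪ Fin n) := Function.Embedding.nonempty_of_card_le (by simpa using hc)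
      refine ⟨fun i => R.attach.filter (fun t => e t = i) |>.map (Function.Embedding.subtype _), ?_, ?_, ?_⟩
      · intro i j hij
        rw [Finset.disjoint_left]
        intro x hx hx'
        simp at hx hx'
        obtain ⟨h1, h2⟩ := hx
        obtain ⟨h3, h4⟩ := hx'
        exact hij (h2.symm.trans h4)
      · ext x; simp
      · intro i
        rw [Finset.card_map, Finset.card_le_one]
        intro a ha b hb
        simp at ha hb
        exact e.injective (ha.trans hb.symm)
    obtain ⟨A, hA, hmax⟩ := Set.exists_max_image Q (fun A => ∑ i, ∑ t ∈ A i, v i t)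
      (Set.toFinite _) hne
    refine ⟨A, hA.1, hA.2.1, fun σ => ?_, fun i j => ?_⟩
    · refine hmax (fun i => A (σ i)) ⟨fun i j hij => hA.1 _ _ (fun h => hij (σ.injective h)), ?_,
        fun i => hA.2.2 _⟩
      rw [← hA.2.1]
      ext x
      simp only [Finset.mem_biUnion, Finset.mem_univ, true_and]
      exact ⟨fun ⟨i, h⟩ => ⟨_, h⟩, fun ⟨i, h⟩ => ⟨σ.symm i, by simpa using h⟩⟩
    · rcases (A j).eq_empty_or_nonempty with h | ⟨t, ht⟩
      · exact Or.inl h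
      · refine Or.inr ⟨t, ht, ?_⟩
        have : (A j).erase t = ∅ := by
          rw [← Finset.card_eq_zero, Finset.card_erase_of_mem ht]
          have := hA.2.2 j
          omega
        rw [this, Finset.sum_empty]
        exact Finset.sum_nonneg fun s _ => hv i s
  · set Q : Set (Fin n → I) := {a | Function.Injective a ∧ ∀ i, a i ∈ R} with hQ
    have hne : Q.Nonempty := by
      obtain ⟨e⟩ : Nonempty (Fin n ↪ R) := Function.Embedding.nonempty_of_card_le
        (by simpa using (not_le.1 hc).le)
      exact ⟨fun i => e i, fun i j h => e.injective (Subtype.ext h), fun i => (e i).2⟩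
    obtain ⟨a, ⟨ainj, aR⟩, hmax⟩ := Set.exists_max_image Q (fun a => ∑ i, v i (a i))
      (Set.toFinite _) hne
    have hsub : Finset.univ.image a ⊆ R := by
      intro x hx
      obtain ⟨i, _, rfl⟩ := Finset.mem_image.1 hx
      exact aR i
    have hcard : (R \ Finset.univ.image a).card < m := by
      rw [Finset.card_sdiff_of_subset hsub, Finset.card_image_of_injective _ ainj]
      simp; omega
    have best : ∀ i, ∀ t ∈ R \ Finset.univ.image a, v i t ≤ v i (a i) := by
      intro i t ht
      rw [Finset.mem_sdiff] at ht
      have hta : ∀ k, a k ≠ t := fun k h => ht.2 (h ▸ Finset.mem_image_of_mem a (Finset.mem_univ k))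
      have h1 := hmax (Function.update a i t) ⟨?_, ?_⟩
      ·
        rw [← Finset.add_sum_erase _ _ (Finset.mem_univ i),
          ← Finset.add_sum_erase _ (fun k => v k (a k)) (Finset.mem_univ i)] at h1
        have h2 : ∑ x ∈ Finset.univ.erase i, v x (Function.update a i t x) =
            ∑ x ∈ Finset.univ.erase i, v x (a x) := by
          refine Finset.sum_congr rfl fun x hx => ?_
          rw [Function.update_of_ne (Finset.ne_of_mem_erase hx)]
        rw [h2, Function.update_self] at h1
        linarith
      · intro x y hxy
        by_cases hx : x = i <;> by_cases hy : y = i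
        · rw [hx, hy]
        · subst hx
          rw [Function.update_self, Function.update_of_ne hy] at hxy
          exact absurd hxy.symm (hta y)
        · subst hy
          rw [Function.update_self, Function.update_of_ne hx] at hxy
          exact absurd hxy (hta x)
        · rw [Function.update_of_ne hx, Function.update_of_ne hy] at hxy
          exact ainj hxy
      · intro k
        by_cases hk : k = i
        · rw [hk, Function.update_self]; exact ht.1
        · rw [Function.update_of_ne hk]; exact aR k
    obtain ⟨B, Bdis, Bun, Bwel, Bef⟩ := ih _ hcard (R \ Finset.univ.image a) rfl
    have hBR : ∀ j, ∀ t ∈ B j, t ∈ R \ Finset.univ.image a := fun j t ht => by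
      rw [← Bun]; exact Finset.mem_biUnion.2 ⟨j, Finset.mem_univ _, ht⟩
    have haB : ∀ i j, a i ∉ B j := fun i j h =>
      (Finset.mem_sdiff.1 (hBR j _ h)).2 (Finset.mem_image_of_mem a (Finset.mem_univ i))
    have hsum : ∀ i j, ∑ t ∈ insert (a j) (B j), v i t = v i (a j) + ∑ t ∈ B j, v i t :=
      fun i j => Finset.sum_insert (haB j j)
    refine ⟨fun i => insert (a i) (B i), ?_, ?_, ?_, ?_⟩
    · intro i j hij
      rw [Finset.disjoint_insert_left, Finset.disjoint_insert_right]
      refine ⟨?_, haB j i, Bdis i j hij⟩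
      rw [Finset.mem_insert]
      rintro (h | h)
      · exact hij (ainj h)
      · exact haB i j h
    · ext x
      simp only [Finset.mem_biUnion, Finset.mem_univ, true_and, Finset.mem_insert]
      constructor
      · rintro ⟨i, rfl | h⟩
        · exact aR i
        · exact (Finset.mem_sdiff.1 (hBR i x h)).1
      · intro hx
        by_cases h : x ∈ Finset.univ.image a
        · obtain ⟨i, _, rfl⟩ := Finset.mem_image.1 h
          exact ⟨i, Or.inl rfl⟩
        · have : x ∈ Finset.univ.biUnion B := by rw [Bun]; exact Finset.mem_sdiff.2 ⟨hx, h⟩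
          obtain ⟨i, _, hi⟩ := Finset.mem_biUnion.1 this
          exact ⟨i, Or.inr hi⟩
    · intro σ
      simp only [hsum, Finset.sum_add_distrib]
      refine add_le_add ?_ (Bwel σ)
      exact hmax (fun i => a (σ i)) ⟨ainj.comp σ.injective, fun i => aR _⟩
    · intro i j
      refine Or.inr ⟨a j, Finset.mem_insert_self _ _, ?_⟩
      dsimp only
      rw [Finset.erase_insert (haB j j), hsum]
      rcases Bef i j with h | ⟨t, ht, h⟩
      · rw [h, Finset.sum_empty]
        exact add_nonneg (hv _ _) (Finset.sum_nonneg fun s _ => hv i s)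
      · rw [← Finset.add_sum_erase _ _ ht]
        exact add_le_add (best i t (hBR j t ht)) h

/-- Water filling: truncated shifted potentials can be normalised to total 1. -/
theorem exists_level (n : ℕ) (hn : 0 < n) (q : Fin n → ℝ) :
    ∃ l : ℝ, ∑ i, max 0 (q i - l) = 1 := by
  have : Nonempty (Fin n) := ⟨⟨0, hn⟩⟩
  obtain ⟨k, hk⟩ := Finite.exists_max q
  have c : Continuous fun l : ℝ => ∑ i, max 0 (q i - l) := by fun_prop
  have h1 : ∑ i, max 0 (q i - q k) = 0 :=
    Finset.sum_eq_zero fun i _ => max_eq_left (by linarith [hk i])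
  have h2 : 1 ≤ ∑ i, max 0 (q i - (q k - 1)) := by
    refine le_trans ?_ (Finset.single_le_sum (f := fun i => max 0 (q i - (q k - 1)))
      (fun i _ => le_max_left _ _) (Finset.mem_univ k))
    refine le_trans ?_ (le_max_right _ _)
    linarith
  obtain ⟨l, _, e⟩ := intermediate_value_Icc' (show q k - 1 ≤ q k by linarith) c.continuousOn
    (show (1:ℝ) ∈ _ by rw [h1]; exact ⟨zero_le_one, h2⟩)
  exact ⟨l, e⟩

theorem exists_scale (I : Type) [Fintype I] (u : I → ℝ) : ∃ K : ℝ, 0 < K ∧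
    ∀ S T : Finset I, ∑ t ∈ S, u t < ∑ t ∈ T, u t → 1 < K * (∑ t ∈ T, u t - ∑ t ∈ S, u t) := by
  classical
  obtain ⟨M, hM⟩ := Finite.exists_le (fun x : Finset I × Finset I =>
    2 / (∑ t ∈ x.2, u t - ∑ t ∈ x.1, u t))
  refine ⟨max M 1, lt_of_lt_of_le zero_lt_one (le_max_right _ _), fun S T h => ?_⟩
  have h1 := (hM (S, T)).trans (le_max_left M 1)
  dsimp only at h1
  rw [div_le_iff₀ (by linarith)] at h1
  linarith

/-- With indivisible goods (every agent values every item
non-negatively) and cake utilities given by nonnegative integrable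
densities on `[0,1]`, an EFM allocation always exists. -/
theorem efm_exists_goods_and_cake
    (n : ℕ) (hn : 0 < n) (I : Type) [Fintype I] [DecidableEq I]
    (u : Fin n → I → ℝ)
    (f : Fin n → ℝ → ℝ)
    (hf_nonneg : ∀ i x, 0 ≤ f i x)
    (hf_int : ∀ i, IntegrableOn (f i) (Set.Icc (0 : ℝ) 1))
    (hgoods : ∀ (i : Fin n) (t : I), 0 ≤ u i t) :
    ∃ (A : Fin n → Finset I) (C : Fin n → Set ℝ),
      -- (A_1, …, A_n) is a partition of the items
      (∀ i j, i ≠ j → Disjoint (A i) (A j)) ∧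
      (Finset.univ.biUnion A = Finset.univ) ∧
      -- (C_1, …, C_n) is a measurable partition of the cake [0,1]
      (∀ i, MeasurableSet (C i)) ∧
      (∀ i j, i ≠ j → Disjoint (C i) (C j)) ∧
      ((⋃ i, C i) = Set.Icc (0 : ℝ) 1) ∧
      -- EFM
      (∀ i j : Fin n,
        (∑ t ∈ A i, u i t) + (∫ x in C i, f i x) ≥
            (∑ t ∈ A j, u i t) + (∫ x in C j, f i x) ∨
          ((∫ x in C j, f i x) = 0 ∧
            ∃ t ∈ A i ∪ A j,
              (∑ s ∈ (A i).erase t, u i s) ≥ ∑ s ∈ (A j).erase t, u i s)) := by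
  -- total cake values
  set c : Fin n → ℝ := fun i => ∫ x in Set.Icc (0:ℝ) 1, f i x with hc
  have hc0 : ∀ i, 0 ≤ c i := fun i => integral_nonneg (hf_nonneg i)
  -- positive scaling factors
  have hscale : ∀ i, ∃ K : ℝ, 0 < K ∧ (0 < c i → K * c i = 1) ∧ (c i = 0 →
      ∀ S T : Finset I, ∑ t ∈ S, u i t < ∑ t ∈ T, u i t →
        1 < K * (∑ t ∈ T, u i t - ∑ t ∈ S, u i t)) := by
    intro i
    rcases (hc0 i).eq_or_lt with h | h
    · obtain ⟨K, hK, hK'⟩ := exists_scale I (u i)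
      exact ⟨K, hK, fun h' => absurd h h'.ne, fun _ => hK'⟩
    · exact ⟨(c i)⁻¹, inv_pos.2 h, fun _ => inv_mul_cancel₀ h.ne', fun h' => absurd h' h.ne'⟩
  choose K hK0 hK1 hK2 using hscale
  have hsc : ∀ i (S : Finset I), ∑ t ∈ S, K i * u i t = K i * ∑ t ∈ S, u i t :=
    fun i S => (Finset.mul_sum _ _ _).symm
  obtain ⟨A, Adis, Aun, Awel, Aef⟩ := exists_ef1_freeable n hn I (fun i t => K i * u i t)
    (fun i t => mul_nonneg (hK0 i).le (hgoods i t)) _ Finset.univ rfl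
  simp only [hsc] at Awel Aef
  obtain ⟨q, hq⟩ := exists_potential
    (fun i j => K i * ∑ t ∈ A j, u i t - K i * ∑ t ∈ A i, u i t) (fun i => sub_self _) (fun σ => by
      rw [Finset.sum_sub_distrib]
      linarith [Awel σ])
  obtain ⟨l, hl⟩ := exists_level n hn q
  set p : Fin n → ℝ := fun i => max 0 (q i - l) with hp
  have hp0 : ∀ i, 0 ≤ p i := fun i => le_max_left _ _
  have hp1 : ∀ i, p i ≤ 1 := fun i => by
    rw [← hl]
    exact Finset.single_le_sum (f := p) (fun i _ => hp0 i) (Finset.mem_univ i)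
  obtain ⟨C, Cm, Cdis, Cun, Cint⟩ := cake_partition n f hf_int p hp0 hl
  refine ⟨A, C, Adis, Aun, Cm, Cdis, Cun, fun i j => ?_⟩
  by_cases hij : i = j
  · subst hij; exact Or.inl le_rfl
  rw [Cint, Cint]
  change _ + p i * c i ≥ _ + p j * c i ∨ (p j * c i = 0 ∧ _)
  rcases (hp0 j).eq_or_lt with hpj | hpj
  · rcases Aef i j with h | ⟨t, ht, h⟩
    · left
      rw [h, ← hpj]
      have h1 : 0 ≤ ∑ t ∈ A i, u i t := Finset.sum_nonneg fun t _ => hgoods i t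
      have h2 := mul_nonneg (hp0 i) (hc0 i)
      simp only [Finset.sum_empty]
      linarith
    · right
      refine ⟨by rw [← hpj, zero_mul], t, Finset.mem_union_right _ ht, ?_⟩
      rw [Finset.erase_eq_of_notMem (Finset.disjoint_right.1 (Adis i j hij) ht)]
      exact le_of_mul_le_mul_left h (hK0 i)
  · left
    have e : p j = q j - l := by
      rcases max_choice 0 (q j - l) with h | h
      · exact absurd h hpj.ne'
      · exact h
    have h1 : K i * ∑ t ∈ A j, u i t - K i * ∑ t ∈ A i, u i t + p j ≤ p i := by
      have := hq i j
      have h2 : q i - l ≤ p i := le_max_right _ _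
      linarith
    rcases (hc0 i).eq_or_lt with h | h
    · rw [← h, mul_zero, mul_zero, add_zero, add_zero]
      by_contra hcon
      have h2 := hK2 i h.symm _ _ (not_le.1 hcon)
      have := hp1 i
      linarith
    · refine le_of_mul_le_mul_left ?_ (hK0 i)
      have h3 := hK1 i h
      have h4 : ∀ x, K i * (x * c i) = x := fun x => by rw [mul_left_comm, h3, mul_one]
      rw [mul_add, mul_add, h4, h4]
      linarith
end
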